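/- arXiv:math/0212105 — 3 statements merged into one kernel-verified Lean document; each statement's English description precedes it below -/
import Mathlib

section
/- Let a ≤ b be real numbers, let f : ℝ → ℂ be Lebesgue integrable on [a,b], and let g : ℝ → ℝ have bounded variation on [a,b]. Then |∫_a^b f(x) g(x) dx| ≤ |∫_a^b f(x) dx| · inf_{x∈[a,b]} |g(x)| + (sup_{a ≤ c ≤ d ≤ b} |∫_c^d f(x) dx|) · V_{[a,b]} g. -/
open MeasureTheory Filter

/-! The layer-cake formula `∫ (g - c)⁺ f = ∫_c^d (∫_{r ≤ g} f) dr`, for `g ≤ d`, applied to the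
positive and the negative part of `g - g x`, bounds `∫ (g - g x) f` by integrals of `f` over
superlevel sets. When `g` is monotone these sets are intervals, so
`‖∫_a^b (g - g x) f‖ ≤ ‖f‖ (g b - g a)` with `‖f‖` the Alexiewicz norm. If `g` has bounded variation
and `v` is its variation function, then `2 (g - g x)` is the difference of the corresponding
increments of the monotone functions `v + g` and `v - g`, whose total increases over `[a, b]` add up
to `2 V_{[a,b]} g`. -/

open Set

variable {E : Type*} [NormedAddCommGroup E] [NormedSpace ℝ E]

section LayerCake

variable {α : Type*} [MeasurableSpace α] {μ : Measure α} {f : α → E} {g : α → ℝ} {c d M : ℝ}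

theorem intervalIntegral_indicator_Iic_const [CompleteSpace E] (hcd : c ≤ d) {y : ℝ} (hy : y ≤ d)
    (e : E) : ∫ r in c..d, (Iic y).indicator (fun _ ↦ e) r = max (y - c) 0 • e := by
  rw [intervalIntegral.integral_of_le hcd, integral_indicator_const e measurableSet_Iic,
    measureReal_restrict_apply measurableSet_Iic, inter_comm, Ioc_inter_Iic, inf_eq_right.2 hy,
    Real.volume_real_Ioc]

theorem integral_max_sub_zero_smul_eq_intervalIntegral [CompleteSpace E] [SFinite μ]
    (hf : Integrable f μ) (hg : AEMeasurable g μ) (hcd : c ≤ d) (hgd : ∀ᵐ x ∂μ, g x ≤ d) :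
    ∫ x, max (g x - c) 0 • f x ∂μ = ∫ r in c..d, ∫ x in {x | r ≤ g x}, f x ∂μ := by
  have hint : Integrable (fun p : ℝ × α ↦ (Iic (g p.2)).indicator (fun _ ↦ f p.2) p.1)
      ((volume.restrict (uIoc c d)).prod μ) := by
    rw [uIoc_of_le hcd]
    exact (hf.comp_snd _).indicator₀ (nullMeasurableSet_le measurable_fst.aemeasurable hg.comp_snd)
  calc ∫ x, max (g x - c) 0 • f x ∂μ
      = ∫ x, (∫ r in c..d, (Iic (g x)).indicator (fun _ ↦ f x) r) ∂μ := by
        refine integral_congr_ae (hgd.mono fun x hx ↦ ?_)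
        exact (intervalIntegral_indicator_Iic_const hcd hx (f x)).symm
    _ = ∫ r in c..d, ∫ x, (Iic (g x)).indicator (fun _ ↦ f x) r ∂μ :=
        (intervalIntegral_integral_swap hint).symm
    _ = ∫ r in c..d, ∫ x in {x | r ≤ g x}, f x ∂μ := by
        refine intervalIntegral.integral_congr fun r _ ↦ ?_
        exact integral_indicator₀ (nullMeasurableSet_le aemeasurable_const hg)

theorem norm_integral_max_sub_zero_smul_le [CompleteSpace E] [SFinite μ]
    (hf : Integrable f μ) (hg : AEMeasurable g μ) (hcd : c ≤ d) (hgd : ∀ᵐ x ∂μ, g x ≤ d)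
    (hM : ∀ r, ‖∫ x in {x | r ≤ g x}, f x ∂μ‖ ≤ M) :
    ‖∫ x, max (g x - c) 0 • f x ∂μ‖ ≤ M * (d - c) := by
  rw [integral_max_sub_zero_smul_eq_intervalIntegral hf hg hcd hgd,
    ← abs_of_nonneg (sub_nonneg.2 hcd)]
  exact intervalIntegral.norm_integral_le_of_norm_le_const fun r _ ↦ hM r

end LayerCake

section OrdConnected

variable {α : Type*} [ConditionallyCompleteLinearOrder α] [MeasurableSpace α]
  {μ : Measure α} [NullSingletonClass μ] {s : Set α}

theorem ordConnected_ae_eq_Ioc_sInf_sSup (hs : s.OrdConnected) (hne : s.Nonempty)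
    (hbelow : BddBelow s) (habove : BddAbove s) : s =ᵐ[μ] Ioc (sInf s) (sSup s) := by
  have hsub : Ioo (sInf s) (sSup s) ⊆ s := fun x ⟨hx, hx'⟩ ↦
    let ⟨_, hy, hyx⟩ := exists_lt_of_csInf_lt hne hx
    let ⟨_, hz, hxz⟩ := exists_lt_of_lt_csSup hne hx'
    hs.out hy hz ⟨hyx.le, hxz.le⟩
  have hsup : s ⊆ Icc (sInf s) (sSup s) := subset_Icc_csInf_csSup hbelow habove
  exact (hsup.eventuallyLE.trans_eq Ioc_ae_eq_Icc.symm).antisymm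
    (Ioo_ae_eq_Ioc.symm.trans_le hsub.eventuallyLE)

end OrdConnected

/-- The Alexiewicz norm of `f` over `[a, b]` with respect to `μ`: the supremum of the norms of the
integrals of `f` over subintervals. As a real supremum it is `0` if these norms are unbounded, which
does not happen for `f` integrable on `[a, b]`. -/
noncomputable def alexiewiczNorm (f : ℝ → E) (μ : Measure ℝ) (a b : ℝ) : ℝ :=
  sSup {r : ℝ | ∃ c d : ℝ, a ≤ c ∧ c ≤ d ∧ d ≤ b ∧ r = ‖∫ x in c..d, f x ∂μ‖}

variable {μ : Measure ℝ} {f : ℝ → E} {g : ℝ → ℝ} {a b c d x : ℝ}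

theorem norm_intervalIntegral_le_alexiewiczNorm (hf : IntegrableOn f (Icc a b) μ)
    (hac : a ≤ c) (hcd : c ≤ d) (hdb : d ≤ b) :
    ‖∫ x in c..d, f x ∂μ‖ ≤ alexiewiczNorm f μ a b := by
  refine le_csSup ⟨∫ x in Icc a b, ‖f x‖ ∂μ, ?_⟩ ⟨c, d, hac, hcd, hdb, rfl⟩
  rintro _ ⟨c, d, hac, hcd, hdb, rfl⟩
  have hsub : Ioc c d ⊆ Icc a b := Ioc_subset_Icc_self.trans (Icc_subset_Icc hac hdb)
  calc ‖∫ x in c..d, f x ∂μ‖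
      ≤ ∫ x in Ioc c d, ‖f x‖ ∂μ := by
        rw [intervalIntegral.integral_of_le hcd]
        exact norm_integral_le_integral_norm f
    _ ≤ ∫ x in Icc a b, ‖f x‖ ∂μ :=
        setIntegral_mono_set hf.norm (ae_of_all _ fun _ ↦ norm_nonneg _) hsub.eventuallyLE

theorem alexiewiczNorm_nonneg : 0 ≤ alexiewiczNorm f μ a b :=
  Real.sSup_nonneg fun _ ⟨_, _, _, _, _, hr⟩ ↦ hr ▸ norm_nonneg _

theorem norm_setIntegral_le_alexiewiczNorm [NullSingletonClass μ] (hf : IntegrableOn f (Icc a b) μ)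
    {s : Set ℝ} (hs : s.OrdConnected) (hsub : s ⊆ Icc a b) :
    ‖∫ x in s, f x ∂μ‖ ≤ alexiewiczNorm f μ a b := by
  obtain rfl | hne := s.eq_empty_or_nonempty
  · simpa using alexiewiczNorm_nonneg
  have hbelow : BddBelow s := bddBelow_Icc.mono hsub
  have habove : BddAbove s := bddAbove_Icc.mono hsub
  have hle : sInf s ≤ sSup s := csInf_le_csSup hne hbelow habove
  rw [setIntegral_congr_set (ordConnected_ae_eq_Ioc_sInf_sSup hs hne hbelow habove),
    ← intervalIntegral.integral_of_le hle]
  exact norm_intervalIntegral_le_alexiewiczNorm hf (le_csInf hne fun _ hx ↦ (hsub hx).1) hle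
    (csSup_le hne fun _ hx ↦ (hsub hx).2)

theorem aemeasurable_restrict_of_quasiconcaveOn {s : Set ℝ} (hs : MeasurableSet s)
    (hg : QuasiconcaveOn ℝ s g) : AEMeasurable g (μ.restrict s) := by
  refine aemeasurable_restrict_of_measurable_subtype hs (measurable_of_Ici fun r ↦ ?_)
  convert measurable_subtype_coe (hg r).ordConnected.measurableSet using 1
  ext y
  simp

theorem norm_setIntegral_max_sub_zero_smul_le_of_quasiconcaveOn [CompleteSpace E] [SFinite μ]
    [NullSingletonClass μ] (hf : IntegrableOn f (Icc a b) μ) (hg : QuasiconcaveOn ℝ (Icc a b) g)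
    (hcd : c ≤ d) (hgd : ∀ t ∈ Icc a b, g t ≤ d) :
    ‖∫ t in Icc a b, max (g t - c) 0 • f t ∂μ‖ ≤ alexiewiczNorm f μ a b * (d - c) := by
  refine norm_integral_max_sub_zero_smul_le hf
    (aemeasurable_restrict_of_quasiconcaveOn measurableSet_Icc hg) hcd
    (ae_restrict_of_forall_mem measurableSet_Icc hgd) fun r ↦ ?_
  rw [Measure.restrict_restrict' measurableSet_Icc, inter_comm]
  exact norm_setIntegral_le_alexiewiczNorm hf (hg r).ordConnected inter_subset_left

theorem integrableOn_smul_of_monotoneOn (hf : IntegrableOn f (Icc a b) μ)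
    (hg : MonotoneOn g (Icc a b)) : IntegrableOn (fun t ↦ g t • f t) (Icc a b) μ := by
  obtain hab | hab := le_or_gt a b
  · exact hf.smul_of_top_right
      (hg.memLp_top (isLeast_Icc hab) (isGreatest_Icc hab) measurableSet_Icc)
  · simp [Icc_eq_empty_of_lt hab]

theorem integrableOn_smul_of_boundedVariationOn (hf : IntegrableOn f (Icc a b) μ)
    (hg : BoundedVariationOn g (Icc a b)) : IntegrableOn (fun t ↦ g t • f t) (Icc a b) μ := by
  obtain ⟨p, q, hp, hq, rfl⟩ := hg.locallyBoundedVariationOn.exists_monotoneOn_sub_monotoneOn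
  simpa only [Pi.sub_apply, sub_smul] using!
    (integrableOn_smul_of_monotoneOn hf hp).sub (integrableOn_smul_of_monotoneOn hf hq)

theorem setIntegral_sub_smul_eq_sub_of_monotoneOn (hf : IntegrableOn f (Icc a b) μ)
    (hg : MonotoneOn g (Icc a b)) :
    ∫ t in Icc a b, (g t - c) • f t ∂μ =
      (∫ t in Icc a b, max (g t - c) 0 • f t ∂μ) - ∫ t in Icc a b, max (c - g t) 0 • f t ∂μ := by
  have hsub : MonotoneOn (fun t ↦ g t - c) (Icc a b) :=
    fun _ hs _ ht hst ↦ sub_le_sub_right (hg hs ht hst) c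
  have hpos : MonotoneOn (fun t ↦ max (g t - c) 0) (Icc a b) :=
    fun _ hs _ ht hst ↦ max_le_max_right 0 (hsub hs ht hst)
  have hneg : ∀ t, max (c - g t) 0 = max (g t - c) 0 - (g t - c) := fun t ↦ by
    have := max_zero_sub_eq_self (g t - c)
    rw [neg_sub] at this
    linarith
  simp only [hneg, sub_smul (max _ _)]
  rw [integral_sub (integrableOn_smul_of_monotoneOn hf hpos)
    (integrableOn_smul_of_monotoneOn hf hsub), sub_sub_cancel]

theorem norm_setIntegral_sub_smul_le_of_monotoneOn [CompleteSpace E] [SFinite μ]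
    [NullSingletonClass μ] (hf : IntegrableOn f (Icc a b) μ) (hg : MonotoneOn g (Icc a b))
    (hx : x ∈ Icc a b) :
    ‖∫ t in Icc a b, (g t - g x) • f t ∂μ‖ ≤ alexiewiczNorm f μ a b * (g b - g a) := by
  have ha : a ∈ Icc a b := left_mem_Icc.2 (hx.1.trans hx.2)
  have hb : b ∈ Icc a b := right_mem_Icc.2 (hx.1.trans hx.2)
  have hneg : AntitoneOn (fun t ↦ -g t) (Icc a b) := hg.neg
  have hpos_le := norm_setIntegral_max_sub_zero_smul_le_of_quasiconcaveOn hf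
    (hg.quasiconcaveOn (convex_Icc a b)) (hg hx hb hx.2) fun t ht ↦ hg ht hb ht.2
  have hneg_le := norm_setIntegral_max_sub_zero_smul_le_of_quasiconcaveOn hf
    (hneg.quasiconcaveOn (convex_Icc a b)) (hneg ha hx hx.1) fun t ht ↦ hneg ha ht ht.1
  simp only [neg_sub_neg] at hneg_le
  rw [setIntegral_sub_smul_eq_sub_of_monotoneOn hf hg]
  refine (norm_sub_le_of_le hpos_le hneg_le).trans_eq ?_
  ring

theorem norm_setIntegral_sub_smul_le_of_boundedVariationOn [CompleteSpace E] [SFinite μ]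
    [NullSingletonClass μ] (hf : IntegrableOn f (Icc a b) μ) (hg : BoundedVariationOn g (Icc a b))
    (hx : x ∈ Icc a b) :
    ‖∫ t in Icc a b, (g t - g x) • f t ∂μ‖ ≤
      alexiewiczNorm f μ a b * (eVariationOn g (Icc a b)).toReal := by
  have hab : a ≤ b := hx.1.trans hx.2
  have ha : a ∈ Icc a b := left_mem_Icc.2 hab
  have hloc := hg.locallyBoundedVariationOn
  set v := variationOnFromTo g (Icc a b) a with hv
  have hadd : MonotoneOn (v + g) (Icc a b) := variationOnFromTo.add_self_monotoneOn hloc ha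
  have hsub : MonotoneOn (v - g) (Icc a b) := variationOnFromTo.sub_self_monotoneOn hloc ha
  have hva : v a = 0 := variationOnFromTo.self ..
  have hvb : v b = (eVariationOn g (Icc a b)).toReal := by
    rw [hv, variationOnFromTo.eq_of_le _ _ hab, inter_self]
  have hint {h : ℝ → ℝ} (hh : MonotoneOn h (Icc a b)) :
      IntegrableOn (fun t ↦ (h t - h x) • f t) (Icc a b) μ :=
    integrableOn_smul_of_monotoneOn hf fun _ hs _ ht hst ↦ sub_le_sub_right (hh hs ht hst) _
  have hsplit : (2 : ℝ) • ∫ t in Icc a b, (g t - g x) • f t ∂μ =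
      (∫ t in Icc a b, ((v + g) t - (v + g) x) • f t ∂μ) -
        ∫ t in Icc a b, ((v - g) t - (v - g) x) • f t ∂μ := by
    rw [← integral_sub (hint hadd) (hint hsub), ← integral_smul]
    congr with t
    simp only [Pi.add_apply, Pi.sub_apply]
    module
  have hle := norm_sub_le_of_le (norm_setIntegral_sub_smul_le_of_monotoneOn hf hadd hx)
    (norm_setIntegral_sub_smul_le_of_monotoneOn hf hsub hx)
  rw [← hsplit, norm_smul, Real.norm_ofNat] at hle
  simp only [Pi.add_apply, Pi.sub_apply, hva, hvb] at hle
  linarith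

theorem norm_intervalIntegral_smul_le_of_boundedVariationOn [CompleteSpace E] [SFinite μ]
    [NullSingletonClass μ] (hf : IntegrableOn f (Icc a b) μ)
    (hg : BoundedVariationOn g (Icc a b)) (hx : x ∈ Icc a b) :
    ‖∫ t in a..b, g t • f t ∂μ‖ ≤
      ‖∫ t in a..b, f t ∂μ‖ * |g x| +
        alexiewiczNorm f μ a b * (eVariationOn g (Icc a b)).toReal := by
  have hsplit : ∫ t in a..b, g t • f t ∂μ =
      g x • (∫ t in a..b, f t ∂μ) + ∫ t in Icc a b, (g t - g x) • f t ∂μ := by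
    simp only [intervalIntegral.integral_of_le (hx.1.trans hx.2), ← integral_Icc_eq_integral_Ioc,
      sub_smul]
    rw [integral_sub (integrableOn_smul_of_boundedVariationOn hf hg) (hf.fun_smul (g x)),
      integral_smul, add_sub_cancel]
  rw [hsplit]
  refine norm_add_le_of_le ?_ (norm_setIntegral_sub_smul_le_of_boundedVariationOn hf hg hx)
  rw [norm_smul, Real.norm_eq_abs, mul_comm]

theorem stmt2_general [CompleteSpace E] [SFinite μ] [NullSingletonClass μ] (hab : a ≤ b)
    (hf : IntegrableOn f (Icc a b) μ) (hg : BoundedVariationOn g (Icc a b)) :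
    ‖∫ x in a..b, g x • f x ∂μ‖ ≤
      ‖∫ x in a..b, f x ∂μ‖ * sInf {r : ℝ | ∃ x ∈ Icc a b, r = |g x|} +
        alexiewiczNorm f μ a b * (eVariationOn g (Icc a b)).toReal := by
  rw [← sub_le_iff_le_add, ← smul_eq_mul (‖_‖), ← Real.sInf_smul_of_nonneg (norm_nonneg _)]
  refine le_csInf (Nonempty.smul_set ⟨|g a|, a, left_mem_Icc.2 hab, rfl⟩) ?_
  rintro _ ⟨_, ⟨x, hx, rfl⟩, rfl⟩
  exact sub_le_iff_le_add.2 (norm_intervalIntegral_smul_le_of_boundedVariationOn hf hg hx)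

/-- Lemma 2: for `f` Lebesgue integrable on `[a,b]` and `g` of bounded variation on `[a,b]`,
`|∫_a^b f g| ≤ |∫_a^b f| · inf_{[a,b]} |g| + ‖f‖_{[a,b]} · V_{[a,b]} g`, where
`‖f‖_{[a,b]} = sup_{a ≤ c ≤ d ≤ b} |∫_c^d f|` is the Alexiewicz norm. -/
theorem stmt2 (a b : ℝ) (hab : a ≤ b) (f : ℝ → ℂ) (g : ℝ → ℝ)
    (hf : IntegrableOn f (Set.Icc a b))
    (hg : BoundedVariationOn g (Set.Icc a b)) :
    ‖∫ x in a..b, f x * ((g x : ℝ) : ℂ)‖ ≤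
      ‖∫ x in a..b, f x‖ * sInf {r : ℝ | ∃ x ∈ Set.Icc a b, r = |g x|} +
      sSup {r : ℝ | ∃ c d : ℝ, a ≤ c ∧ c ≤ d ∧ d ≤ b ∧ r = ‖∫ x in c..d, f x‖} *
        (eVariationOn g (Set.Icc a b)).toReal := by
  simpa only [Complex.real_smul, mul_comm (f _), alexiewiczNorm] using stmt2_general hab hf hg
end

section
/- Let s₀ ∈ ℝ, let g : ℝ → ℝ have bounded variation on [0,∞), and let h : ℝ → ℂ be locally integrable on [0,∞). For s ∈ ℝ and x ≥ 0 set H_s(x) = ∫_0^x e^{-ist} h(t) dt. Suppose there are δ, K > 0 such that: (i) for every s with |s − s₀| < δ the improper integral ĥ(s) := lim_{T→∞} ∫_0^T e^{-isx} h(x) dx exists and the function s ↦ ĥ(s) is continuous at s₀; and (ii) |H_s(x)| ≤ K for all x ≥ 0 and all s with |s − s₀| < δ. Then for every s with |s − s₀| < δ the improper integral F(s) := lim_{T→∞} ∫_0^T e^{-isx} g(x) h(x) dx exists, and F is continuous at s₀. -/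
open MeasureTheory Filter

/-!
Integrating by parts against the primitive `F x = ∫ t in a..x, f s t` writes
`∫ t in a..T, g t • f s t` as a boundary term `g T • F T` plus a remainder `R s T`, formally
`-∫ F dg`. If `‖F‖ ≤ K`, then `R s` moves by at most `K` times the variation of `g`, and this
variation tends to `0` at infinity, so `R s T` converges uniformly in `s`. The limit therefore
inherits the continuity in `s` of the integrals over bounded intervals, while the boundary term
converges to `lim g` times the limit of `F`.
-/

section BoundedVariation

open Set Topology

theorem dist_le_variationOnFromTo {α V : Type*} [LinearOrder α] [PseudoMetricSpace V] {g : α → V}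
    {s : Set α} (hg : LocallyBoundedVariationOn g s) {x y : α} (hx : x ∈ s) (hy : y ∈ s)
    (hxy : x ≤ y) : dist (g x) (g y) ≤ variationOnFromTo g s x y := by
  rw [variationOnFromTo.eq_of_le g s hxy, dist_edist]
  exact ENNReal.toReal_mono (hg x y hx hy)
    (eVariationOn.edist_le g ⟨hx, le_rfl, hxy⟩ ⟨hy, hxy, le_rfl⟩)

theorem dist_le_dist_variationOnFromTo {α V : Type*} [LinearOrder α] [PseudoMetricSpace V]
    {g : α → V} {s : Set α} (hg : LocallyBoundedVariationOn g s) {a x y : α} (ha : a ∈ s)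
    (hx : x ∈ s) (hy : y ∈ s) :
    dist (g x) (g y) ≤ dist (variationOnFromTo g s a x) (variationOnFromTo g s a y) := by
  wlog hxy : x ≤ y generalizing x y
  · rw [dist_comm (g x), dist_comm (variationOnFromTo g s a x)]
    exact this hy hx (le_of_not_ge hxy)
  calc dist (g x) (g y) ≤ variationOnFromTo g s x y := dist_le_variationOnFromTo hg hx hy hxy
    _ = variationOnFromTo g s a y - variationOnFromTo g s a x :=
      (variationOnFromTo.sub_right hg ha hy hx).symm
    _ ≤ dist (variationOnFromTo g s a x) (variationOnFromTo g s a y) := by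
      rw [dist_comm]
      exact le_abs_self _

theorem continuousWithinAt_of_continuousWithinAt_variationOnFromTo {α V : Type*} [LinearOrder α]
    [TopologicalSpace α] [PseudoMetricSpace V] {g : α → V} {s : Set α}
    (hg : LocallyBoundedVariationOn g s) {a x : α} (ha : a ∈ s) (hx : x ∈ s)
    (h : ContinuousWithinAt (variationOnFromTo g s a) s x) : ContinuousWithinAt g s x := by
  rw [ContinuousWithinAt, tendsto_iff_dist_tendsto_zero] at h ⊢
  refine squeeze_zero' (.of_forall fun _ => dist_nonneg) ?_ h
  filter_upwards [self_mem_nhdsWithin] with y hy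
  exact dist_le_dist_variationOnFromTo hg ha hy hx

theorem countable_not_continuousWithinAt_of_locallyBoundedVariationOn {α V : Type*} [LinearOrder α]
    [TopologicalSpace α] [OrderTopology α] [SecondCountableTopology α] [PseudoMetricSpace V]
    {g : α → V} {s : Set α} (hg : LocallyBoundedVariationOn g s) :
    {x ∈ s | ¬ContinuousWithinAt g s x}.Countable := by
  obtain rfl | ⟨a, ha⟩ := s.eq_empty_or_nonempty
  · simp
  · refine (variationOnFromTo.monotoneOn hg ha).countable_not_continuousWithinAt.mono ?_
    exact fun x hx => ⟨hx.1, fun h =>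
      hx.2 (continuousWithinAt_of_continuousWithinAt_variationOnFromTo hg ha hx.1 h)⟩

theorem aestronglyMeasurable_restrict_of_locallyBoundedVariationOn {α V : Type*} [LinearOrder α]
    [TopologicalSpace α] [OrderTopology α] [SecondCountableTopology α] [MeasurableSpace α]
    [BorelSpace α] [PseudoMetricSpace V] {g : α → V} {s : Set α} {μ : Measure α}
    [NullSingletonClass μ] (hg : LocallyBoundedVariationOn g s) (hs : MeasurableSet s) :
    AEStronglyMeasurable g (μ.restrict s) := by
  set c := {x ∈ s | ¬ContinuousWithinAt g s x}
  have hc : c.Countable := countable_not_continuousWithinAt_of_locallyBoundedVariationOn hg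
  have hcont : ContinuousOn g (s \ c) := fun x hx =>
    (not_not.1 fun h => hx.2 ⟨hx.1, h⟩ : ContinuousWithinAt g s x).mono sdiff_subset
  rw [← Measure.restrict_congr_set (sdiff_null_ae_eq_self (hc.measure_zero μ))]
  exact hcont.aestronglyMeasurable (hs.diff hc.measurableSet)

theorem intervalIntegrable_smul_of_boundedVariationOn {𝕜 E : Type*} [NormedRing 𝕜]
    [NormedAddCommGroup E] [Module 𝕜 E] [IsBoundedSMul 𝕜 E] {g : ℝ → 𝕜} {f : ℝ → E} {x y : ℝ}
    (hg : BoundedVariationOn g (uIcc x y)) (hf : IntervalIntegrable f volume x y) :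
    IntervalIntegrable (fun t => g t • f t) volume x y := by
  have hmeas : AEStronglyMeasurable g (volume.restrict (uIoc x y)) :=
    (aestronglyMeasurable_restrict_of_locallyBoundedVariationOn hg.locallyBoundedVariationOn
      measurableSet_uIcc).mono_measure (Measure.restrict_mono uIoc_subset_uIcc le_rfl)
  rw [intervalIntegrable_iff] at hf ⊢
  refine hf.bdd_smul (‖g x‖ + (eVariationOn g (uIcc x y)).toReal) hmeas ?_
  filter_upwards [ae_restrict_mem measurableSet_uIoc] with t ht
  exact norm_le_norm_add_const_of_dist_le (hg.dist_le (uIoc_subset_uIcc ht) left_mem_uIcc)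

/-- Bisecting `[a, b]` at a point that halves the increment of `Φ`, again and again, removes the
term `Φ y - Φ x`. -/
theorem dist_le_mul_of_dist_le_mul_add {V : Type*} [PseudoMetricSpace V] {R : ℝ → V} {W Φ : ℝ → ℝ}
    {a b M : ℝ} (hab : a ≤ b) (hΦ : ContinuousOn Φ (Icc a b))
    (h : ∀ x ∈ Icc a b, ∀ y ∈ Icc a b, x ≤ y →
      dist (R x) (R y) ≤ (W y - W x) * (M + (Φ y - Φ x))) :
    dist (R a) (R b) ≤ (W b - W a) * M := by
  have halving : ∀ n : ℕ, ∀ x ∈ Icc a b, ∀ y ∈ Icc a b, x ≤ y →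
      dist (R x) (R y) ≤ (W y - W x) * (M + (Φ y - Φ x) / 2 ^ n) := by
    intro n
    induction n with
    | zero => simpa using h
    | succ n ih =>
      intro x hx y hy hxy
      have hmid : (Φ x + Φ y) / 2 ∈ uIcc (Φ x) (Φ y) := by
        rw [mem_uIcc]; grind
      obtain ⟨m, hm, hΦm⟩ := intermediate_value_uIcc
        (hΦ.mono (uIcc_subset_Icc hx hy)) hmid
      rw [uIcc_of_le hxy] at hm
      have hm' : m ∈ Icc a b := ⟨hx.1.trans hm.1, hm.2.trans hy.2⟩
      calc dist (R x) (R y) ≤ dist (R x) (R m) + dist (R m) (R y) := dist_triangle _ _ _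
        _ ≤ (W m - W x) * (M + (Φ m - Φ x) / 2 ^ n) + (W y - W m) * (M + (Φ y - Φ m) / 2 ^ n) :=
          add_le_add (ih x hx m hm' hm.1) (ih m hm' y hy hm.2)
        _ = (W y - W x) * (M + (Φ y - Φ x) / 2 ^ (n + 1)) := by
          rw [hΦm, pow_succ]; ring
  have hlim : Tendsto (fun n : ℕ => (W b - W a) * (M + (Φ b - Φ a) / 2 ^ n)) atTop
      (𝓝 ((W b - W a) * (M + 0))) :=
    ((tendsto_const_nhds.div_atTop (tendsto_pow_atTop_atTop_of_one_lt one_lt_two)).const_add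
      M).const_mul _
  rw [add_zero] at hlim
  exact ge_of_tendsto' hlim fun n => halving n a (left_mem_Icc.2 hab) b (right_mem_Icc.2 hab) hab

end BoundedVariation

section Remainder

open Set Topology

variable {𝕜 E : Type*} [NormedField 𝕜] [NormedAddCommGroup E] [NormedSpace ℝ E] [NormedSpace 𝕜 E]

variable {g : ℝ → 𝕜} {f : ℝ → E} {s : Set ℝ} {a x y M : ℝ}

theorem norm_integral_sub_smul_le (hg : BoundedVariationOn g s) (hs : s.OrdConnected)
    (hx : x ∈ s) (hy : y ∈ s) (hxy : x ≤ y) (hf : IntervalIntegrable f volume x y) :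
    ‖∫ t in x..y, (g t - g y) • f t‖ ≤ variationOnFromTo g s x y * ∫ t in x..y, ‖f t‖ := by
  rw [← intervalIntegral.integral_const_mul]
  refine intervalIntegral.norm_integral_le_of_norm_le hxy (.of_forall fun t ht => ?_)
    (hf.norm.const_mul _)
  have hts : t ∈ s := hs.out hx hy (Ioc_subset_Icc_self ht)
  have hmono : variationOnFromTo g s t y ≤ variationOnFromTo g s x y :=
    variationOnFromTo.antitoneOn hg.locallyBoundedVariationOn hy hx hts ht.1.le
  rw [norm_smul, ← dist_eq_norm]
  gcongr
  exact (dist_le_variationOnFromTo hg.locallyBoundedVariationOn hts hy ht.2).trans hmono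

/-- The term left over when `∫ t in a..x, g t • f t` is integrated by parts, with boundary term
`g x • F x` for the primitive `F x = ∫ t in a..x, f t`. It stands for the Stieltjes integral
`-∫ F dg` over `(a, x]`, and is encoded as a difference so as to need no measure `dg`. -/
noncomputable def stieltjesRemainder (g : ℝ → 𝕜) (f : ℝ → E) (a x : ℝ) : E :=
  (∫ t in a..x, g t • f t) - g x • ∫ t in a..x, f t

variable [SMulCommClass ℝ 𝕜 E]

theorem stieltjesRemainder_sub (hfx : IntervalIntegrable f volume a x)
    (hfxy : IntervalIntegrable f volume x y)
    (hgfx : IntervalIntegrable (fun t => g t • f t) volume a x)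
    (hgfxy : IntervalIntegrable (fun t => g t • f t) volume x y) :
    stieltjesRemainder g f a y - stieltjesRemainder g f a x =
      (∫ t in x..y, (g t - g y) • f t) - (g y - g x) • ∫ t in a..x, f t := by
  have hdiff : ∫ t in x..y, (g t - g y) • f t =
      (∫ t in x..y, g t • f t) - g y • ∫ t in x..y, f t := by
    simp only [sub_smul]
    rw [intervalIntegral.integral_sub hgfxy (by exact hfxy.smul (g y)),
      intervalIntegral.integral_smul]
  rw [hdiff, stieltjesRemainder, stieltjesRemainder,
    ← intervalIntegral.integral_add_adjacent_intervals hfx hfxy,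
    ← intervalIntegral.integral_add_adjacent_intervals hgfx hgfxy]
  module

theorem dist_stieltjesRemainder_le_mul_add (hg : BoundedVariationOn g s) (hs : s.OrdConnected)
    (ha : a ∈ s) (hx : x ∈ s) (hy : y ∈ s) (hxy : x ≤ y)
    (hfx : IntervalIntegrable f volume a x) (hfxy : IntervalIntegrable f volume x y)
    (hM : ‖∫ t in a..x, f t‖ ≤ M) :
    dist (stieltjesRemainder g f a x) (stieltjesRemainder g f a y) ≤
      variationOnFromTo g s x y * (M + ∫ t in x..y, ‖f t‖) := by
  have hint {u v : ℝ} (hu : u ∈ s) (hv : v ∈ s) (hf : IntervalIntegrable f volume u v) :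
      IntervalIntegrable (fun t => g t • f t) volume u v :=
    intervalIntegrable_smul_of_boundedVariationOn (hg.mono (hs.uIcc_subset hu hv)) hf
  have hgxy : ‖g y - g x‖ ≤ variationOnFromTo g s x y := by
    rw [← dist_eq_norm, dist_comm]
    exact dist_le_variationOnFromTo hg.locallyBoundedVariationOn hx hy hxy
  rw [dist_comm, dist_eq_norm,
    stieltjesRemainder_sub hfx hfxy (hint ha hx hfx) (hint hx hy hfxy)]
  calc ‖(∫ t in x..y, (g t - g y) • f t) - (g y - g x) • ∫ t in a..x, f t‖
      ≤ ‖∫ t in x..y, (g t - g y) • f t‖ + ‖g y - g x‖ * ‖∫ t in a..x, f t‖ := by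
        rw [← norm_smul]
        exact norm_sub_le _ _
    _ ≤ variationOnFromTo g s x y * (∫ t in x..y, ‖f t‖) + variationOnFromTo g s x y * M :=
        add_le_add (norm_integral_sub_smul_le hg hs hx hy hxy hfxy)
          (mul_le_mul hgxy hM (norm_nonneg _) (variationOnFromTo.nonneg_of_le g s hxy))
    _ = variationOnFromTo g s x y * (M + ∫ t in x..y, ‖f t‖) := by ring

theorem dist_stieltjesRemainder_le (hg : BoundedVariationOn g s) (hs : s.OrdConnected)
    (ha : a ∈ s) (hx : x ∈ s) (hy : y ∈ s) (hxy : x ≤ y)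
    (hf : ∀ t ∈ s, IntervalIntegrable f volume a t) (hM : ∀ t ∈ s, ‖∫ u in a..t, f u‖ ≤ M) :
    dist (stieltjesRemainder g f a x) (stieltjesRemainder g f a y) ≤
      variationOnFromTo g s x y * M := by
  have hvar {u v : ℝ} (hu : u ∈ s) (hv : v ∈ s) :
      variationOnFromTo g s x v - variationOnFromTo g s x u = variationOnFromTo g s u v :=
    variationOnFromTo.sub_right hg.locallyBoundedVariationOn hx hv hu
  have hsub : Icc x y ⊆ s := hs.out hx hy
  have hfuv {u v : ℝ} (hu : u ∈ s) (hv : v ∈ s) : IntervalIntegrable f volume u v :=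
    (hf u hu).symm.trans (hf v hv)
  have hcont : ContinuousOn (fun t => ∫ u in x..t, ‖f u‖) (Icc x y) :=
    uIcc_of_le hxy ▸ intervalIntegral.continuousOn_primitive_interval' (hfuv hx hy).norm
      left_mem_uIcc
  rw [← hvar hx hy]
  refine dist_le_mul_of_dist_le_mul_add hxy hcont fun u hu v hv huv => ?_
  rw [hvar (hsub hu) (hsub hv), intervalIntegral.integral_interval_sub_left
    (hfuv hx (hsub hv)).norm (hfuv hx (hsub hu)).norm]
  exact dist_stieltjesRemainder_le_mul_add hg hs ha (hsub hu) (hsub hv) huv (hf u (hsub hu))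
    (hfuv (hsub hu) (hsub hv)) (hM u (hsub hu))

end Remainder

section AbelTest

open Set Topology

variable {𝕜 E X : Type*} [NormedField 𝕜] [NormedAddCommGroup E] [NormedSpace ℝ E] [NormedSpace 𝕜 E]
  [SMulCommClass ℝ 𝕜 E] {g : ℝ → 𝕜} {f : X → ℝ → E} {S : Set X} {a K : ℝ}

theorem uniformCauchySeqOn_stieltjesRemainder (hg : BoundedVariationOn g (Ici a))
    (hf : ∀ s ∈ S, ∀ x ∈ Ici a, IntervalIntegrable (f s) volume a x)
    (hK : ∀ s ∈ S, ∀ x ∈ Ici a, ‖∫ t in a..x, f s t‖ ≤ K) :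
    UniformCauchySeqOn (fun T s => stieltjesRemainder g (f s) a T) atTop S := by
  have htail : Tendsto (fun T => (eVariationOn g (Ici a ∩ Ici T)).toReal * K) atTop (𝓝 0) := by
    have h := hg.tendsto_eVariationOn_Ici_zero
    rw [inf_eq_right.2 (le_principal_iff.2 (Ici_mem_atTop a))] at h
    simpa using ((ENNReal.tendsto_toReal ENNReal.zero_ne_top).comp h).mul_const K
  rw [Metric.uniformCauchySeqOn_iff]
  intro ε hε
  obtain ⟨N, hNε, hNa⟩ := ((htail.eventually_lt_const hε).and (eventually_ge_atTop a)).exists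
  refine ⟨N, fun m hm n hn s hs => ?_⟩
  wlog hmn : m ≤ n generalizing m n
  · rw [dist_comm]
    exact this n hn m hm (le_of_not_ge hmn)
  have hma : m ∈ Ici a := hNa.trans hm
  have hna : n ∈ Ici a := hNa.trans hn
  have hK0 : 0 ≤ K := (norm_nonneg _).trans (hK s hs a self_mem_Ici)
  calc dist (stieltjesRemainder g (f s) a m) (stieltjesRemainder g (f s) a n)
      ≤ variationOnFromTo g (Ici a) m n * K :=
        dist_stieltjesRemainder_le hg ordConnected_Ici self_mem_Ici hma hna hmn (hf s hs) (hK s hs)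
    _ ≤ (eVariationOn g (Ici a ∩ Ici N)).toReal * K := by
        rw [variationOnFromTo.eq_of_le g _ hmn]
        gcongr
        · exact hg.mono inter_subset_left
        · exact eVariationOn.mono g (inter_subset_inter_right _ fun t ht => hm.trans ht.1)
    _ < ε := hNε

theorem exists_tendstoUniformlyOn_stieltjesRemainder [CompleteSpace E]
    (hg : BoundedVariationOn g (Ici a))
    (hf : ∀ s ∈ S, ∀ x ∈ Ici a, IntervalIntegrable (f s) volume a x)
    (hK : ∀ s ∈ S, ∀ x ∈ Ici a, ‖∫ t in a..x, f s t‖ ≤ K) :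
    ∃ R : X → E, TendstoUniformlyOn (fun T s => stieltjesRemainder g (f s) a T) R atTop S := by
  have hcauchy := uniformCauchySeqOn_stieltjesRemainder hg hf hK
  exact ⟨fun s => limUnder atTop (stieltjesRemainder g (f s) a),
    hcauchy.tendstoUniformlyOn_of_tendsto fun s hs => (hcauchy.cauchySeq hs).tendsto_limUnder⟩

theorem exists_tendsto_integral_smul_continuousWithinAt [CompleteSpace 𝕜] [CompleteSpace E]
    [TopologicalSpace X] {G : X → E} {s₀ : X} (hs₀ : s₀ ∈ S) (hg : BoundedVariationOn g (Ici a))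
    (hf : ∀ s ∈ S, ∀ x ∈ Ici a, IntervalIntegrable (f s) volume a x)
    (hK : ∀ s ∈ S, ∀ x ∈ Ici a, ‖∫ t in a..x, f s t‖ ≤ K)
    (hG : ∀ s ∈ S, Tendsto (fun T => ∫ t in a..T, f s t) atTop (𝓝 (G s)))
    (hGcont : ContinuousWithinAt G S s₀)
    (hfcont : ∀ x ∈ Ici a, ContinuousWithinAt (fun s => ∫ t in a..x, f s t) S s₀)
    (hgfcont : ∀ x ∈ Ici a, ContinuousWithinAt (fun s => ∫ t in a..x, g t • f s t) S s₀) :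
    ∃ F : X → E, (∀ s ∈ S, Tendsto (fun T => ∫ t in a..T, g t • f s t) atTop (𝓝 (F s))) ∧
      ContinuousWithinAt F S s₀ := by
  obtain ⟨R, hR⟩ := exists_tendstoUniformlyOn_stieltjesRemainder hg hf hK
  obtain ⟨L, hL⟩ := hg.exists_tendsto_atTop
  rw [inf_eq_right.2 (le_principal_iff.2 (Ici_mem_atTop a))] at hL
  have hRcont : ContinuousWithinAt R S s₀ := by
    refine continuousWithinAt_of_locally_uniform_approx_of_continuousWithinAt hs₀ fun u hu => ?_
    obtain ⟨T, hT, hTa⟩ := ((hR u hu).and (eventually_ge_atTop a)).exists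
    exact ⟨S, self_mem_nhdsWithin, fun s => stieltjesRemainder g (f s) a T,
      (hgfcont T hTa).sub ((hfcont T hTa).const_smul (g T)), hT⟩
  refine ⟨fun s => R s + L • G s, fun s hs => ?_, hRcont.add (hGcont.const_smul L)⟩
  refine ((hR.tendsto_at hs).add (hL.smul (hG s hs))).congr fun T => ?_
  exact sub_add_cancel _ _

end AbelTest

section FourierKernel

theorem norm_exp_neg_I_mul_mul (s t : ℝ) :
    ‖Complex.exp (-(Complex.I * (s : ℂ) * (t : ℂ)))‖ = 1 := by
  rw [← Complex.norm_exp_ofReal_mul_I (-(s * t))]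
  congr 2
  push_cast
  ring

variable {E : Type*} [NormedAddCommGroup E] [NormedSpace ℂ E] {k : ℝ → E} {a b : ℝ}

theorem intervalIntegrable_exp_neg_I_mul_smul (hk : IntervalIntegrable k volume a b) (s : ℝ) :
    IntervalIntegrable (fun t : ℝ => Complex.exp (-(Complex.I * (s : ℂ) * (t : ℂ))) • k t)
      volume a b :=
  hk.continuousOn_smul (by fun_prop)

theorem continuous_integral_exp_neg_I_mul_smul (hk : IntervalIntegrable k volume a b) :
    Continuous fun s : ℝ =>
      ∫ t in a..b, Complex.exp (-(Complex.I * (s : ℂ) * (t : ℂ))) • k t := by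
  refine intervalIntegral.continuous_of_dominated_interval
    (fun s => (intervalIntegrable_exp_neg_I_mul_smul hk s).def'.aestronglyMeasurable)
    (fun s => .of_forall fun t _ => ?_) hk.norm (.of_forall fun t _ => by fun_prop)
  rw [norm_smul, norm_exp_neg_I_mul_mul, one_mul]

end FourierKernel

theorem stmt7_general {E : Type*} [NormedAddCommGroup E] [NormedSpace ℂ E] [CompleteSpace E]
    {S : Set ℝ} {s₀ : ℝ} (hs₀ : s₀ ∈ S) {g : ℝ → ℂ} {h : ℝ → E}
    (hg : BoundedVariationOn g (Set.Ici 0))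
    (hh : ∀ x : ℝ, 0 ≤ x → IntervalIntegrable h volume 0 x)
    {K : ℝ} {G : ℝ → E}
    (hG : ∀ s ∈ S, Tendsto (fun T : ℝ => ∫ x in (0 : ℝ)..T,
      Complex.exp (-(Complex.I * (s : ℂ) * (x : ℂ))) • h x) atTop (nhds (G s)))
    (hGcont : ContinuousWithinAt G S s₀)
    (hH : ∀ s ∈ S, ∀ x : ℝ, 0 ≤ x →
      ‖∫ t in (0 : ℝ)..x, Complex.exp (-(Complex.I * (s : ℂ) * (t : ℂ))) • h t‖ ≤ K) :
    ∃ F : ℝ → E,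
      (∀ s ∈ S, Tendsto (fun T : ℝ => ∫ x in (0 : ℝ)..T,
        Complex.exp (-(Complex.I * (s : ℂ) * (x : ℂ))) • g x • h x) atTop (nhds (F s))) ∧
      ContinuousWithinAt F S s₀ := by
  have hgh (x : ℝ) (hx : 0 ≤ x) : IntervalIntegrable (fun t => g t • h t) volume 0 x :=
    intervalIntegrable_smul_of_boundedVariationOn
      (hg.mono (Set.ordConnected_Ici.uIcc_subset Set.self_mem_Ici hx)) (hh x hx)
  simp only [smul_comm (Complex.exp _) (g _)]
  refine exists_tendsto_integral_smul_continuousWithinAt hs₀ hg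
    (fun s _ x hx => intervalIntegrable_exp_neg_I_mul_smul (hh x hx) s) hH hG hGcont
    (fun x hx => (continuous_integral_exp_neg_I_mul_smul (hh x hx)).continuousWithinAt)
    (fun x hx => ?_)
  simp only [smul_comm (g _) (Complex.exp _)]
  exact (continuous_integral_exp_neg_I_mul_smul (hgh x hx)).continuousWithinAt

/-- Proposition 3(b) (Abel type test for continuity): with `g` of bounded variation on
`[0,∞)`, `h` locally integrable on `[0,∞)`, `ĥ` existing near `s₀` and continuous at `s₀`,
and the partial integrals `H_s(x) = ∫_0^x e^{-ist} h(t) dt` uniformly bounded, the transform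
`F(s) = lim_{T→∞} ∫_0^T e^{-isx} g(x) h(x) dx` exists near `s₀` and is continuous at `s₀`. -/
theorem stmt7 (s₀ : ℝ) (g : ℝ → ℝ) (h : ℝ → ℂ)
    (hg : BoundedVariationOn g (Set.Ici 0))
    (hh : ∀ a b : ℝ, 0 ≤ a → IntegrableOn h (Set.Icc a b))
    (δ K : ℝ) (hδ : 0 < δ) (hK : 0 < K)
    (G : ℝ → ℂ)
    (hG : ∀ s : ℝ, |s - s₀| < δ →
      Tendsto (fun T : ℝ => ∫ x in (0:ℝ)..T,
          Complex.exp (-(Complex.I * (s : ℂ) * (x : ℂ))) * h x) atTop (nhds (G s)))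
    (hGcont : ContinuousWithinAt G {s : ℝ | |s - s₀| < δ} s₀)
    (hH : ∀ s : ℝ, |s - s₀| < δ → ∀ x : ℝ, 0 ≤ x →
      ‖∫ t in (0:ℝ)..x, Complex.exp (-(Complex.I * (s : ℂ) * (t : ℂ))) * h t‖ ≤ K) :
    ∃ F : ℝ → ℂ,
      (∀ s : ℝ, |s - s₀| < δ →
        Tendsto (fun T : ℝ => ∫ x in (0:ℝ)..T,
            Complex.exp (-(Complex.I * (s : ℂ) * (x : ℂ))) * (((g x : ℝ) : ℂ) * h x))
          atTop (nhds (F s))) ∧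
      ContinuousWithinAt F {s : ℝ | |s - s₀| < δ} s₀ := by
  exact stmt7_general (S := {s | |s - s₀| < δ}) (by simpa using hδ)
    (Complex.isometry_ofReal.lipschitz.comp_boundedVariationOn hg)
    (fun x hx => (intervalIntegrable_iff_integrableOn_Icc_of_le hx).2 (hh 0 x le_rfl)) hG hGcont hH
end

section
/- Let f : ℝ → ℂ be locally integrable such that F(x) = ∫_0^x f has finite limits as x → ∞ and as x → −∞. Let g : ℝ → ℝ have bounded variation on ℝ and let h : ℝ → ℂ be Lebesgue integrable on ℝ. For each x define f∗g(x) = lim_{T₁,T₂→∞} ∫_{-T₁}^{T₂} f(x−t) g(t) dt (this limit exists for every x), define g∗h(x) = ∫_{-∞}^{∞} g(x−y) h(y) dy (a Lebesgue integral, since g is bounded), and define (f∗g)∗h(x) = ∫_{-∞}^{∞} (f∗g)(x−y) h(y) dy and f∗(g∗h)(x) = lim_{T₁,T₂→∞} ∫_{-T₁}^{T₂} f(x−t)(g∗h)(t) dt. Then for every x ∈ ℝ, (f∗g)∗h(x) = f∗(g∗h)(x), both sides existing. -/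
open MeasureTheory Filter

open Set Topology

/-!
A function `g` of bounded variation is a difference of monotone functions, and the superlevel sets
of a monotone function are intervals, so the layer-cake formula bounds `∫ g u` over `[a, b]` by
`|g a|` plus the variation of `g`, times the largest integral of `u` over a subinterval. Applied to
the tails of `u = f (x - ·)`, this is Dirichlet's test and gives the existence of `f ∗ g`. Applied
to whole windows, it bounds `∫_{-T₁}^{T₂} f (x - t) g (t - y) dt` uniformly in `T₁`, `T₂` and `y`.
On each window Fubini's theorem interchanges the integrations in `t` and `y`, and the uniform bound
times `|h|` dominates the resulting integrands in `y`, so the limit passes under the integral sign.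
-/

section VariationBound

variable {E : Type*} [NormedAddCommGroup E] [NormedSpace ℝ E]

theorem ae_eq_Ioc_csInf_csSup_of_isConnected {α : Type*} [ConditionallyCompleteLinearOrder α]
    [TopologicalSpace α] [OrderTopology α] [MeasurableSpace α] {μ : Measure α}
    [NullSingletonClass μ] {s : Set α} (hs : IsConnected s) (hb : BddBelow s) (ha : BddAbove s) :
    s =ᵐ[μ] Ioc (sInf s) (sSup s) := by
  refine EventuallyLE.antisymm ?_ ?_
  · exact (subset_Icc_csInf_csSup hb ha).eventuallyLE.trans Ioc_ae_eq_Icc.symm.le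
  · exact Ioo_ae_eq_Ioc.symm.le.trans (hs.Ioo_csInf_csSup_subset hb ha).eventuallyLE

theorem norm_setIntegral_le_of_ordConnected {u : ℝ → E} {a b M : ℝ} (hab : a ≤ b)
    (hM : ∀ c ∈ Icc a b, ∀ d ∈ Icc a b, ‖∫ t in c..d, u t‖ ≤ M)
    {s : Set ℝ} (hs : s.OrdConnected) (hsab : s ⊆ Icc a b) :
    ‖∫ t in s, u t‖ ≤ M := by
  obtain rfl | hne := s.eq_empty_or_nonempty
  · simpa using hM a (left_mem_Icc.2 hab) a (left_mem_Icc.2 hab)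
  have hbelow : BddBelow s := bddBelow_Icc.mono hsab
  have habove : BddAbove s := bddAbove_Icc.mono hsab
  have hclosure : closure s ⊆ Icc a b := isClosed_Icc.closure_subset_iff.2 hsab
  rw [setIntegral_congr_set
      (ae_eq_Ioc_csInf_csSup_of_isConnected ⟨hne, hs.isPreconnected⟩ hbelow habove),
    ← intervalIntegral.integral_of_le (csInf_le_csSup hne hbelow habove)]
  exact hM _ (hclosure (csInf_mem_closure hne hbelow)) _ (hclosure (csSup_mem_closure hne habove))

theorem intervalIntegrable_smul_of_monotone {p : ℝ → ℝ} (hp : Monotone p) {u : ℝ → E} {a b : ℝ}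
    (hu : IntervalIntegrable u volume a b) :
    IntervalIntegrable (fun t => p t • u t) volume a b := by
  rw [intervalIntegrable_iff'] at hu ⊢
  exact Integrable.smul_of_top_right hu
    ((hp.monotoneOn _).memLp_top (isLeast_Icc inf_le_sup) (isGreatest_Icc inf_le_sup)
      measurableSet_Icc)

-- The layer-cake formula: `p t - p a` is the length of the set of levels `s ∈ (p a, p b]` below
-- `p t`.
theorem integral_sub_smul_eq_integral_superlevel [CompleteSpace E] {p : ℝ → ℝ} (hp : Monotone p)
    {u : ℝ → E} {a b : ℝ} (hab : a ≤ b) (hu : IntervalIntegrable u volume a b) :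
    ∫ t in a..b, (p t - p a) • u t =
      ∫ s in p a..p b, ∫ t in Ioc a b ∩ {t | s < p t}, u t := by
  let subgraph : Set (ℝ × ℝ) := {z | z.2 < p z.1}
  have hsubgraph : MeasurableSet subgraph :=
    measurableSet_lt measurable_snd (hp.measurable.comp measurable_fst)
  have hint : Integrable (Function.uncurry fun t s => subgraph.indicator (fun z => u z.1) (t, s))
      ((volume.restrict (uIoc a b)).prod (volume.restrict (Ioc (p a) (p b)))) :=
    ((intervalIntegrable_iff.1 hu).comp_fst _).indicator hsubgraph
  calc ∫ t in a..b, (p t - p a) • u t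
      = ∫ t in a..b, ∫ s in Ioc (p a) (p b), subgraph.indicator (fun z => u z.1) (t, s) := by
        refine intervalIntegral.integral_congr fun t ht => ?_
        rw [uIcc_of_le hab] at ht
        have hlevels : Ioc (p a) (p b) ∩ Iio (p t) = Ioo (p a) (p t) := by
          ext s
          simp only [mem_inter_iff, mem_Ioc, mem_Iio, mem_Ioo]
          exact ⟨fun h => ⟨h.1.1, h.2⟩, fun h => ⟨⟨h.1, h.2.le.trans (hp ht.2)⟩, h.2⟩⟩
        calc (p t - p a) • u t = ∫ _ in Ioo (p a) (p t), u t := by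
              rw [setIntegral_const, Real.volume_real_Ioo_of_le (hp ht.1)]
          _ = ∫ s in Ioc (p a) (p b), (Iio (p t)).indicator (fun _ => u t) s := by
              rw [setIntegral_indicator measurableSet_Iio, hlevels]
    _ = ∫ s in Ioc (p a) (p b), ∫ t in a..b, subgraph.indicator (fun z => u z.1) (t, s) :=
        intervalIntegral_integral_swap hint
    _ = ∫ s in p a..p b, ∫ t in Ioc a b ∩ {t | s < p t}, u t := by
        rw [intervalIntegral.integral_of_le (hp hab)]
        refine integral_congr_ae (Eventually.of_forall fun s => ?_)
        dsimp only
        rw [intervalIntegral.integral_of_le hab,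
          ← setIntegral_indicator (measurableSet_lt measurable_const hp.measurable)]
        rfl

theorem norm_integral_sub_smul_le_of_monotone [CompleteSpace E] {p : ℝ → ℝ} (hp : Monotone p)
    {u : ℝ → E} {a b M : ℝ} (hab : a ≤ b) (hu : IntervalIntegrable u volume a b)
    (hM : ∀ c ∈ Icc a b, ∀ d ∈ Icc a b, ‖∫ t in c..d, u t‖ ≤ M) :
    ‖∫ t in a..b, (p t - p a) • u t‖ ≤ (p b - p a) * M := by
  have hsuperlevel (s : ℝ) : ‖∫ t in Ioc a b ∩ {t | s < p t}, u t‖ ≤ M := by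
    refine norm_setIntegral_le_of_ordConnected hab hM (ordConnected_Ioc.inter ?_)
      (inter_subset_left.trans Ioc_subset_Icc_self)
    exact ⟨fun x hx y _ z hz => hx.trans_le (hp hz.1)⟩
  rw [integral_sub_smul_eq_integral_superlevel hp hab hu]
  have := intervalIntegral.norm_integral_le_of_norm_le_const (a := p a) (b := p b)
    fun s _ => hsuperlevel s
  rwa [abs_of_nonneg (sub_nonneg.2 (hp hab)), mul_comm] at this

theorem measurable_of_locallyBoundedVariationOn_univ {g : ℝ → ℝ}
    (hg : LocallyBoundedVariationOn g univ) : Measurable g := by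
  obtain ⟨p, n, hp, hn, rfl⟩ := hg.exists_monotoneOn_sub_monotoneOn
  exact (monotoneOn_univ.1 hp).measurable.sub (monotoneOn_univ.1 hn).measurable

theorem intervalIntegrable_smul_of_locallyBoundedVariationOn {g : ℝ → ℝ}
    (hg : LocallyBoundedVariationOn g univ) {u : ℝ → E} {a b : ℝ}
    (hu : IntervalIntegrable u volume a b) :
    IntervalIntegrable (fun t => g t • u t) volume a b := by
  obtain ⟨p, n, hp, hn, rfl⟩ := hg.exists_monotoneOn_sub_monotoneOn
  simp only [Pi.sub_apply, sub_smul]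
  exact (intervalIntegrable_smul_of_monotone (monotoneOn_univ.1 hp) hu).sub
    (intervalIntegrable_smul_of_monotone (monotoneOn_univ.1 hn) hu)

theorem norm_integral_smul_le_of_locallyBoundedVariationOn [CompleteSpace E] {g : ℝ → ℝ}
    (hg : LocallyBoundedVariationOn g univ) {u : ℝ → E} {a b M : ℝ} (hab : a ≤ b)
    (hu : IntervalIntegrable u volume a b)
    (hM : ∀ c ∈ Icc a b, ∀ d ∈ Icc a b, ‖∫ t in c..d, u t‖ ≤ M) :
    ‖∫ t in a..b, g t • u t‖ ≤ (|g a| + variationOnFromTo g univ a b) * M := by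
  obtain ⟨p, n, hp, hn, hgpn, hvar⟩ := hg.exists_monotoneOn_sub_monotoneOn'
  rw [monotoneOn_univ] at hp hn
  have hint {q : ℝ → ℝ} (hq : Monotone q) :
      IntervalIntegrable (fun t => (q t - q a) • u t) volume a b :=
    intervalIntegrable_smul_of_monotone (fun s t hst => sub_le_sub_right (hq hst) _) hu
  have hgau : IntervalIntegrable (fun t => g a • u t) volume a b := hu.smul _
  have hsplit : ∫ t in a..b, g t • u t = g a • (∫ t in a..b, u t) +
      ((∫ t in a..b, (p t - p a) • u t) - ∫ t in a..b, (n t - n a) • u t) := by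
    rw [← intervalIntegral.integral_sub (hint hp) (hint hn), ← intervalIntegral.integral_smul,
      ← intervalIntegral.integral_add hgau ((hint hp).sub (hint hn))]
    congr 1 with t
    simp only [hgpn, Pi.sub_apply]
    module
  calc ‖∫ t in a..b, g t • u t‖
      ≤ ‖g a • ∫ t in a..b, u t‖ +
        (‖∫ t in a..b, (p t - p a) • u t‖ + ‖∫ t in a..b, (n t - n a) • u t‖) := by
        rw [hsplit]
        exact (norm_add_le _ _).trans (add_le_add_right (norm_sub_le _ _) _)
    _ ≤ |g a| * M + ((p b - p a) * M + (n b - n a) * M) := by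
        rw [norm_smul, Real.norm_eq_abs]
        gcongr
        · exact hM a (left_mem_Icc.2 hab) b (right_mem_Icc.2 hab)
        · exact norm_integral_sub_smul_le_of_monotone hp hab hu hM
        · exact norm_integral_sub_smul_le_of_monotone hn hab hu hM
    _ = (|g a| + variationOnFromTo g univ a b) * M := by
        rw [← hvar a (mem_univ a) b (mem_univ b)]
        ring

theorem exists_abs_le_of_boundedVariationOn_univ {α : Type*} [LinearOrder α] {g : α → ℝ}
    (hg : BoundedVariationOn g univ) : ∃ C, ∀ t, |g t| ≤ C := by
  obtain _ | ⟨⟨t₀⟩⟩ := isEmpty_or_nonempty α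
  · exact ⟨0, isEmptyElim⟩
  refine ⟨|g t₀| + (eVariationOn g univ).toReal, fun t => ?_⟩
  have hdist : |g t - g t₀| ≤ (eVariationOn g univ).toReal := by
    simpa only [Real.dist_eq] using hg.dist_le (mem_univ t) (mem_univ t₀)
  linarith [abs_sub_abs_le_abs_sub (g t) (g t₀)]

theorem exists_forall_norm_integral_smul_le [CompleteSpace E] {g : ℝ → ℝ}
    (hg : BoundedVariationOn g univ) :
    ∃ C > 0, ∀ (u : ℝ → E) (a b M : ℝ), IntervalIntegrable u volume a b →
      (∀ c ∈ uIcc a b, ∀ d ∈ uIcc a b, ‖∫ t in c..d, u t‖ ≤ M) →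
      ‖∫ t in a..b, g t • u t‖ ≤ C * M := by
  obtain ⟨B, hB⟩ := exists_abs_le_of_boundedVariationOn_univ hg
  have hB_nonneg : 0 ≤ B := (abs_nonneg _).trans (hB 0)
  refine ⟨B + (eVariationOn g univ).toReal + 1, by positivity, fun u a b M hu hM => ?_⟩
  have hM_nonneg : 0 ≤ M := (norm_nonneg _).trans (hM a left_mem_uIcc a left_mem_uIcc)
  wlog hab : a ≤ b generalizing a b
  · rw [intervalIntegral.integral_symm, norm_neg]
    exact this b a hu.symm (by rwa [uIcc_comm]) (le_of_not_ge hab)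
  rw [uIcc_of_le hab] at hM
  refine (norm_integral_smul_le_of_locallyBoundedVariationOn hg.locallyBoundedVariationOn hab hu
    hM).trans ?_
  refine mul_le_mul_of_nonneg_right ?_ hM_nonneg
  linarith [hB a, (le_abs_self _).trans
    (variationOnFromTo.abs_le_eVariationOn hg (a := a) (b := b))]

end VariationBound

section ImproperIntegral

variable {E : Type*} [NormedAddCommGroup E] [NormedSpace ℝ E]

/-- The improper integral `∫_{-T₁}^{T₂} u`, with `T₁, T₂ → ∞` independently, converges to `l`. -/
def HasImproperIntegral (u : ℝ → E) (l : E) : Prop :=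
  Tendsto (fun T : ℝ × ℝ => ∫ t in (-T.1)..T.2, u t) (atTop ×ˢ atTop) (𝓝 l)

/-- Locally integrable functions on `ℝ` whose integral converges, possibly only conditionally, at
both ends; these are the functions that can be convolved with functions of bounded variation. -/
structure ImproperlyIntegrable (u : ℝ → E) : Prop where
  intervalIntegrable : ∀ a b, IntervalIntegrable u volume a b
  tendsto_atTop : ∃ l, Tendsto (fun x : ℝ => ∫ t in (0 : ℝ)..x, u t) atTop (𝓝 l)
  tendsto_atBot : ∃ l, Tendsto (fun x : ℝ => ∫ t in (0 : ℝ)..x, u t) atBot (𝓝 l)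

theorem HasImproperIntegral.comp_sub_right {u : ℝ → E} {l : E} (hu : HasImproperIntegral u l)
    (y : ℝ) : HasImproperIntegral (fun t => u (t - y)) l := by
  have hshift : Tendsto (fun T : ℝ × ℝ => (T.1 + y, T.2 - y)) (atTop ×ˢ atTop)
      (atTop ×ˢ atTop) :=
    (tendsto_atTop_add_const_right _ y tendsto_id).prodMap
      (tendsto_atTop_add_const_right _ (-y) tendsto_id)
  refine (hu.comp hshift).congr fun T => ?_
  rw [Function.comp_apply, intervalIntegral.integral_comp_sub_right, neg_add']

namespace ImproperlyIntegrable

variable {u : ℝ → E}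

theorem exists_hasImproperIntegral (hu : ImproperlyIntegrable u) :
    ∃ l, HasImproperIntegral u l := by
  obtain ⟨r, hr⟩ := hu.tendsto_atTop
  obtain ⟨l, hl⟩ := hu.tendsto_atBot
  refine ⟨r - l, ((hr.comp tendsto_snd).sub
    ((hl.comp tendsto_neg_atTop_atBot).comp tendsto_fst)).congr fun T => ?_⟩
  exact intervalIntegral.integral_interval_sub_left (hu.intervalIntegrable _ _)
    (hu.intervalIntegrable _ _)

theorem exists_norm_integral_le (hu : ImproperlyIntegrable u) :
    ∃ M, ∀ a b, ‖∫ t in a..b, u t‖ ≤ M := by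
  obtain ⟨r, hr⟩ := hu.tendsto_atTop
  obtain ⟨l, hl⟩ := hu.tendsto_atBot
  have hbounded : Bornology.IsBounded (range fun x : ℝ => ∫ t in (0 : ℝ)..x, u t) :=
    (intervalIntegral.continuous_primitive hu.intervalIntegrable
      0).isBounded_range_iff_isBigO_atTop_atBot.2 ⟨hr.isBigO_one ℝ, hl.isBigO_one ℝ⟩
  obtain ⟨B, hB⟩ := isBounded_iff_forall_norm_le.1 hbounded
  refine ⟨B + B, fun a b => ?_⟩
  rw [← intervalIntegral.integral_interval_sub_left (hu.intervalIntegrable 0 b)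
    (hu.intervalIntegrable 0 a)]
  exact (norm_sub_le _ _).trans (add_le_add (hB _ (mem_range_self b)) (hB _ (mem_range_self a)))

theorem comp_sub_left (hu : ImproperlyIntegrable u) (x : ℝ) :
    ImproperlyIntegrable fun t => u (x - t) := by
  have hprimitive (r : ℝ) : (∫ t in (0 : ℝ)..x, u t) - ∫ t in (0 : ℝ)..x - r, u t =
      ∫ t in (0 : ℝ)..r, u (x - t) := by
    rw [intervalIntegral.integral_comp_sub_left, sub_zero,
      intervalIntegral.integral_interval_sub_left (hu.intervalIntegrable _ _)
        (hu.intervalIntegrable _ _)]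
  refine ⟨fun a b => ?_, ?_, ?_⟩
  · simpa only [sub_sub_cancel] using (hu.intervalIntegrable (x - a) (x - b)).comp_sub_left x
  · obtain ⟨l, hl⟩ := hu.tendsto_atBot
    exact ⟨_, ((hl.comp (tendsto_atBot_add_const_left _ x tendsto_neg_atTop_atBot)).const_sub
      _).congr hprimitive⟩
  · obtain ⟨l, hl⟩ := hu.tendsto_atTop
    exact ⟨_, ((hl.comp (tendsto_atTop_add_const_left _ x tendsto_neg_atBot_atTop)).const_sub
      _).congr hprimitive⟩

end ImproperlyIntegrable

theorem exists_tendsto_integral_smul_atTop [CompleteSpace E] {g : ℝ → ℝ}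
    (hg : BoundedVariationOn g univ) {u : ℝ → E} (hu : ∀ a b, IntervalIntegrable u volume a b)
    (hlim : ∃ l, Tendsto (fun x : ℝ => ∫ t in (0 : ℝ)..x, u t) atTop (𝓝 l)) :
    ∃ l, Tendsto (fun x : ℝ => ∫ t in (0 : ℝ)..x, g t • u t) atTop (𝓝 l) := by
  obtain ⟨C, hC, hbound⟩ := exists_forall_norm_integral_smul_le (E := E) hg
  have hgu (a b : ℝ) : IntervalIntegrable (fun t => g t • u t) volume a b :=
    intervalIntegrable_smul_of_locallyBoundedVariationOn hg.locallyBoundedVariationOn (hu a b)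
  refine cauchySeq_tendsto_of_complete (Metric.cauchySeq_iff'.2 fun ε hε => ?_)
  obtain ⟨l, hl⟩ := hlim
  obtain ⟨N, hN⟩ := Metric.cauchySeq_iff.1 hl.cauchySeq (ε / (2 * C)) (by positivity)
  refine ⟨N, fun x hx => ?_⟩
  have hsmall : ∀ c ∈ uIcc N x, ∀ d ∈ uIcc N x, ‖∫ t in c..d, u t‖ ≤ ε / (2 * C) := by
    rw [uIcc_of_le hx]
    intro c hc d hd
    rw [← intervalIntegral.integral_interval_sub_left (hu 0 d) (hu 0 c), ← dist_eq_norm]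
    exact (hN d hd.1 c hc.1).le
  calc dist (∫ t in (0 : ℝ)..x, g t • u t) (∫ t in (0 : ℝ)..N, g t • u t)
      = ‖∫ t in N..x, g t • u t‖ := by
        rw [dist_eq_norm, intervalIntegral.integral_interval_sub_left (hgu 0 x) (hgu 0 N)]
    _ ≤ C * (ε / (2 * C)) := hbound u N x _ (hu N x) hsmall
    _ < ε := by field_simp; linarith

theorem boundedVariationOn_univ_comp_neg {g : ℝ → ℝ} (hg : BoundedVariationOn g univ) :
    BoundedVariationOn (fun t => g (-t)) univ :=
  ne_top_of_le_ne_top hg <| eVariationOn.comp_le_of_antitoneOn g Neg.neg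
    (fun _ _ _ _ hst => neg_le_neg hst) fun _ _ => mem_univ _

theorem ImproperlyIntegrable.smul [CompleteSpace E] {g : ℝ → ℝ} {u : ℝ → E}
    (hu : ImproperlyIntegrable u) (hg : BoundedVariationOn g univ) :
    ImproperlyIntegrable fun t => g t • u t := by
  refine ⟨fun a b => intervalIntegrable_smul_of_locallyBoundedVariationOn
    hg.locallyBoundedVariationOn (hu.intervalIntegrable a b),
    exists_tendsto_integral_smul_atTop hg hu.intervalIntegrable hu.tendsto_atTop, ?_⟩
  have hreflected := hu.comp_sub_left 0
  simp only [zero_sub] at hreflected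
  obtain ⟨l, hl⟩ := exists_tendsto_integral_smul_atTop (boundedVariationOn_univ_comp_neg hg)
    hreflected.intervalIntegrable hreflected.tendsto_atTop
  refine ⟨-l, (hl.comp tendsto_neg_atBot_atTop).neg.congr fun x => ?_⟩
  rw [Function.comp_apply, intervalIntegral.integral_comp_neg fun t => g t • u t, neg_neg, neg_zero,
    ← intervalIntegral.integral_symm]

end ImproperIntegral

section Fubini

variable {E F G : Type*} [NormedAddCommGroup E] [NormedSpace ℝ E]
  [NormedAddCommGroup F] [NormedSpace ℝ F] [NormedAddCommGroup G] [NormedSpace ℝ G]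
  {X : Type*} [MeasurableSpace X] {μ : Measure X}
  (L : E →L[ℝ] F →L[ℝ] G) {k : ℝ → X → ℝ} {u : ℝ → E} {h : X → F} {a b C : ℝ}

theorem integrable_prod_smul_bilin [SFinite μ] (hk : Measurable (Function.uncurry k))
    (hkC : ∀ t y, |k t y| ≤ C) (hu : IntervalIntegrable u volume a b) (hh : Integrable h μ) :
    Integrable (Function.uncurry fun t y => k t y • L (u t) (h y))
      ((volume.restrict (uIoc a b)).prod μ) :=
  (Integrable.op_fst_snd (op := fun v w => L v w) L.continuous₂ ⟨‖L‖, L.le_opNorm₂⟩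
    (intervalIntegrable_iff.1 hu) hh).bdd_smul C hk.aestronglyMeasurable
    (Eventually.of_forall fun z => hkC z.1 z.2)

theorem integral_smul_bilin_left [CompleteSpace E] [CompleteSpace G]
    (hk : Measurable (Function.uncurry k)) (hkC : ∀ t y, |k t y| ≤ C)
    (hu : IntervalIntegrable u volume a b) (y : X) (w : F) :
    ∫ t in a..b, k t y • L (u t) w = L (∫ t in a..b, k t y • u t) w := by
  have hku : IntervalIntegrable (fun t => k t y • u t) volume a b :=
    intervalIntegrable_iff.2 <| (intervalIntegrable_iff.1 hu).bdd_smul C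
      hk.of_uncurry_right.aestronglyMeasurable (Eventually.of_forall fun t => hkC t y)
  simpa using (L.flip w).intervalIntegral_comp_comm hku

theorem integral_smul_bilin_right [CompleteSpace F] [CompleteSpace G]
    (hk : Measurable (Function.uncurry k)) (hkC : ∀ t y, |k t y| ≤ C) (hh : Integrable h μ)
    (t : ℝ) (v : E) :
    ∫ y, k t y • L v (h y) ∂μ = L v (∫ y, k t y • h y ∂μ) := by
  have hkh : Integrable (fun y => k t y • h y) μ :=
    hh.bdd_smul C hk.of_uncurry_left.aestronglyMeasurable (Eventually.of_forall (hkC t))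
  simpa using (L v).integral_comp_comm hkh

theorem integrable_bilin_intervalIntegral [CompleteSpace E] [CompleteSpace G] [SFinite μ]
    (hk : Measurable (Function.uncurry k)) (hkC : ∀ t y, |k t y| ≤ C)
    (hu : IntervalIntegrable u volume a b) (hh : Integrable h μ) :
    Integrable (fun y => L (∫ t in a..b, k t y • u t) (h y)) μ := by
  simp only [← integral_smul_bilin_left L hk hkC hu]
  simp only [intervalIntegral.intervalIntegral_eq_integral_uIoc]
  exact (integrable_prod_smul_bilin L hk hkC hu hh).integral_prod_right.smul
    (if a ≤ b then 1 else -1 : ℝ)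

theorem intervalIntegral_bilin_integral_swap [CompleteSpace E] [CompleteSpace F] [CompleteSpace G]
    [SFinite μ] (hk : Measurable (Function.uncurry k)) (hkC : ∀ t y, |k t y| ≤ C)
    (hu : IntervalIntegrable u volume a b) (hh : Integrable h μ) :
    ∫ t in a..b, L (u t) (∫ y, k t y • h y ∂μ) = ∫ y, L (∫ t in a..b, k t y • u t) (h y) ∂μ := by
  simp only [← integral_smul_bilin_right L hk hkC hh, ← integral_smul_bilin_left L hk hkC hu]
  exact intervalIntegral_integral_swap (integrable_prod_smul_bilin L hk hkC hu hh)

end Fubini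

section Convolution

variable {E F G : Type*} [NormedAddCommGroup E] [NormedSpace ℝ E]
  [NormedAddCommGroup F] [NormedSpace ℝ F] [NormedAddCommGroup G] [NormedSpace ℝ G]
  {f : ℝ → E} {g : ℝ → ℝ} {h : ℝ → F}

theorem exists_norm_integral_smul_translate_le [CompleteSpace E]
    (hf : ImproperlyIntegrable f) (hg : BoundedVariationOn g univ) :
    ∃ K, ∀ x y a b, ‖∫ t in a..b, g (t - y) • f (x - t)‖ ≤ K := by
  obtain ⟨M, hM⟩ := hf.exists_norm_integral_le
  obtain ⟨C, -, hC⟩ := exists_forall_norm_integral_smul_le (E := E) hg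
  refine ⟨C * M, fun x y a b => ?_⟩
  have htranslate := intervalIntegral.integral_comp_sub_right (a := a) (b := b)
    (fun s => g s • f (x - y - s)) y
  simp only [sub_sub_sub_cancel_right] at htranslate
  rw [htranslate]
  refine hC _ _ _ _ ((hf.comp_sub_left (x - y)).intervalIntegrable _ _) fun c _ d _ => ?_
  rw [intervalIntegral.integral_comp_sub_left]
  exact hM _ _

theorem convolution_assoc_of_hasImproperIntegral [CompleteSpace E] [CompleteSpace F]
    [CompleteSpace G] (L : E →L[ℝ] F →L[ℝ] G) (hf : ImproperlyIntegrable f)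
    (hg : BoundedVariationOn g univ) (hh : Integrable h) {fg : ℝ → E}
    (hfg : ∀ x, HasImproperIntegral (fun t => g t • f (x - t)) (fg x)) (x : ℝ) :
    Integrable (fun y => L (fg (x - y)) (h y)) ∧
      HasImproperIntegral (fun t => L (f (x - t)) (∫ y, g (t - y) • h y))
        (∫ y, L (fg (x - y)) (h y)) := by
  obtain ⟨C, hC⟩ := exists_abs_le_of_boundedVariationOn_univ hg
  obtain ⟨K, hK⟩ := exists_norm_integral_smul_translate_le hf hg
  have hk : Measurable (Function.uncurry fun t y : ℝ => g (t - y)) :=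
    (measurable_of_locallyBoundedVariationOn_univ hg.locallyBoundedVariationOn).comp measurable_sub
  have hf' := (hf.comp_sub_left x).intervalIntegrable
  have hmeas (T : ℝ × ℝ) : AEStronglyMeasurable
      (fun y => L (∫ t in (-T.1)..T.2, g (t - y) • f (x - t)) (h y)) :=
    (integrable_bilin_intervalIntegral L hk (fun _ _ => hC _) (hf' _ _) hh).aestronglyMeasurable
  have hlim_window (y : ℝ) : HasImproperIntegral (fun t => g (t - y) • f (x - t)) (fg (x - y)) := by
    simpa only [sub_sub_sub_cancel_right] using (hfg (x - y)).comp_sub_right y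
  have hlim (y : ℝ) : Tendsto (fun T : ℝ × ℝ => L (∫ t in (-T.1)..T.2, g (t - y) • f (x - t)) (h y))
      (atTop ×ˢ atTop) (𝓝 (L (fg (x - y)) (h y))) :=
    ((L.flip (h y)).continuous.tendsto _).comp (hlim_window y)
  have hdom {v : E} (hv : ‖v‖ ≤ K) (y : ℝ) : ‖L v (h y)‖ ≤ ‖L‖ * K * ‖h y‖ :=
    (L.le_opNorm₂ v (h y)).trans (by gcongr)
  have hdom_int : Integrable fun y => ‖L‖ * K * ‖h y‖ := hh.norm.const_mul _
  constructor
  · refine hdom_int.mono'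
      (aestronglyMeasurable_of_tendsto_ae _ hmeas (Eventually.of_forall hlim))
      (Eventually.of_forall fun y => hdom ?_ y)
    exact le_of_tendsto (hlim_window y).norm (Eventually.of_forall fun T => hK _ _ _ _)
  · refine (tendsto_integral_filter_of_dominated_convergence _ (Eventually.of_forall hmeas)
      (Eventually.of_forall fun T => Eventually.of_forall fun y => hdom (hK x y _ _) y) hdom_int
      (Eventually.of_forall hlim)).congr fun T => ?_
    exact (intervalIntegral_bilin_integral_swap L hk (fun _ _ => hC _) (hf' _ _) hh).symm

theorem stmt11_general [CompleteSpace E] [CompleteSpace F] [CompleteSpace G]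
    (L : E →L[ℝ] F →L[ℝ] G) (hf : ImproperlyIntegrable f) (hg : BoundedVariationOn g univ)
    (hh : Integrable h) :
    ∃ fg : ℝ → E,
      (∀ x, HasImproperIntegral (fun t => g t • f (x - t)) (fg x)) ∧
      ∀ x, Integrable (fun y => L (fg (x - y)) (h y)) ∧
        HasImproperIntegral (fun t => L (f (x - t)) (∫ y, g (t - y) • h y))
          (∫ y, L (fg (x - y)) (h y)) := by
  choose fg hfg using fun x => ((hf.comp_sub_left x).smul hg).exists_hasImproperIntegral
  exact ⟨fg, hfg, convolution_assoc_of_hasImproperIntegral L hf hg hh hfg⟩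

end Convolution

/-- Proposition 7(b) (associativity of convolution): for `f` with convergent indefinite
integral at `±∞`, `g` of bounded variation on `ℝ`, and `h ∈ L¹`, one has
`(f∗g)∗h = f∗(g∗h)` on `ℝ`, both sides existing. -/
theorem stmt11 (f : ℝ → ℂ) (g : ℝ → ℝ) (h : ℝ → ℂ)
    (hf : ∀ a b : ℝ, IntegrableOn f (Set.Icc a b))
    (hF₁ : ∃ c : ℂ, Tendsto (fun x : ℝ => ∫ t in (0:ℝ)..x, f t) atTop (nhds c))
    (hF₂ : ∃ c : ℂ, Tendsto (fun x : ℝ => ∫ t in (0:ℝ)..x, f t) atBot (nhds c))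
    (hg : BoundedVariationOn g Set.univ)
    (hh : Integrable h) :
    ∃ fg : ℝ → ℂ,
      -- the improper convolution f∗g exists at every point
      (∀ x : ℝ, Tendsto (fun T : ℝ × ℝ =>
          ∫ t in (-T.1)..T.2, f (x - t) * ((g t : ℝ) : ℂ))
        (atTop ×ˢ atTop) (nhds (fg x))) ∧
      ∀ x : ℝ,
        -- (f∗g)∗h(x) exists as a Lebesgue integral
        Integrable (fun y : ℝ => fg (x - y) * h y) ∧
        -- f∗(g∗h)(x) exists as an improper integral and equals (f∗g)∗h(x)
        Tendsto (fun T : ℝ × ℝ =>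
            ∫ t in (-T.1)..T.2, f (x - t) * (∫ y : ℝ, ((g (t - y) : ℝ) : ℂ) * h y))
          (atTop ×ˢ atTop) (nhds (∫ y : ℝ, fg (x - y) * h y)) := by
  simpa only [HasImproperIntegral, Complex.real_smul, ContinuousLinearMap.mul_apply', mul_comm]
    using stmt11_general (.mul ℝ ℂ)
      ⟨fun a b => (hf _ _).intervalIntegrable, hF₁, hF₂⟩ hg hh
end
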